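/- Let N>1 be an integer. Then c(N) equals the maximum of c(N,n) over all integers n with 0 ≤ n ≤ N−1 and gcd(N,n) > 1. In particular, c(N) = 0 if and only if c(N,n) = 0 for all such pairs (N,n). -/

import Mathlib

namespace Paper

noncomputable section

/-- Closed disk attached to a rational `α = a/b` in lowest terms:
center `α`, radius `1/b`. -/
def disk (α : ℚ) : Set ℂ := Metric.closedBall (α : ℂ) (1 / (α.den : ℝ))

/-- The closed disk `D_{a/b}` of radius `1/b` centered at `a/b`. -/
def diskAt (a b : ℕ) : Set ℂ := Metric.closedBall ((a : ℂ) / (b : ℂ)) (1 / (b : ℝ))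

/-- The north pole `P_α = a/b + i/b` of the disk of `α = a/b` in lowest terms. -/
def northPole (α : ℚ) : ℂ := (α : ℂ) + Complex.I / (α.den : ℂ)

/-- Complexity of the north pole of `α` relative to a set `S` of rationals:
the number of `β ∈ S`, `β ≠ α`, whose disk contains `P_α`. -/
def poleComplexity (S : Set ℚ) (α : ℚ) : ℕ :=
  {β ∈ S | β ≠ α ∧ northPole α ∈ disk β}.ncard

/-- Rationals `a/b ∈ [0,1]` in lowest terms with `N ∣ b`. -/
def cand (N : ℕ) : Set ℚ := {α | 0 ≤ α ∧ α ≤ 1 ∧ N ∣ α.den}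

/-- The region `R_N`. -/
def RN (N : ℕ) : Set ℂ := ⋃ α ∈ cand N, disk α

/-- The set `S_N`: those `α` whose disk is not covered by the other disks. -/
def SSet (N : ℕ) : Set ℚ :=
  {α | α ∈ cand N ∧ ¬ disk α ⊆ ⋃ β ∈ cand N \ {α}, disk β}

/-- The complexity `c(N)`: the maximum of the complexities of north poles of `α ∈ S_N`. -/
def cN (N : ℕ) : ℕ := sSup (poleComplexity (SSet N) '' SSet N)

/-- The least integer `n' > n` with `gcd(N,n') > 1`. -/
def nxt (N n : ℕ) : ℕ := sInf {m | n < m ∧ 1 < Nat.gcd N m}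

/-- Rationals `a/b ∈ [n/N, n'/N]` in lowest terms with `N ∣ b`. -/
def candP (N n : ℕ) : Set ℚ :=
  {α | (n : ℚ) / (N : ℚ) ≤ α ∧ α ≤ (nxt N n : ℚ) / (N : ℚ) ∧ N ∣ α.den}

/-- The region `R_{N,n}` for a pair `(N,n)`. -/
def RP (N n : ℕ) : Set ℂ := ⋃ α ∈ candP N n, disk α

/-- The set `S_{N,n}` for a pair `(N,n)`. -/
def SP (N n : ℕ) : Set ℚ :=
  {α | α ∈ candP N n ∧ ¬ disk α ⊆ ⋃ β ∈ candP N n \ {α}, disk β}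

/-- The complexity `c(N,n)` for a pair `(N,n)`. -/
def cP (N n : ℕ) : ℕ := sSup (poleComplexity (SP N n) '' SP N n)

/-- Shifting `b` by a bounded multiple of a coprime `p` makes it coprime to `N`. -/
theorem exists_isCoprime_add_mul (N : ℕ) (hN : 0 < N) (b p : ℤ) (h : IsCoprime b p) :
    ∃ t : ℕ, t ≤ N ∧ IsCoprime (b + t * p) (N : ℤ) := by
  classical
  set s := N.primeFactors.filter (fun l : ℕ => ¬ (l : ℤ) ∣ b) with hs
  set T : ℕ := ∏ l ∈ s, l
  refine ⟨T, ?_, ?_⟩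
  · refine Nat.le_of_dvd hN (dvd_trans ?_ (Nat.prod_primeFactors_dvd N))
    exact Finset.prod_dvd_prod_of_subset _ _ _ (Finset.filter_subset _ _)
  · rw [Int.isCoprime_iff_gcd_eq_one]
    by_contra hne
    obtain ⟨l, hl, hld⟩ := Nat.exists_prime_and_dvd hne
    have hlp : Prime (l : ℤ) := Nat.prime_iff_prime_int.mp hl
    have h1 : (l : ℤ) ∣ b + (T : ℤ) * p :=
      (Int.natCast_dvd_natCast.mpr hld).trans (Int.gcd_dvd_left _ _)
    have h2 : (l : ℤ) ∣ (N : ℤ) :=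
      (Int.natCast_dvd_natCast.mpr hld).trans (Int.gcd_dvd_right _ _)
    have h2' : l ∣ N := Int.natCast_dvd_natCast.mp h2
    by_cases hb : (l : ℤ) ∣ b
    · rcases hlp.dvd_or_dvd ((dvd_add_right hb).mp h1) with h3 | h3
      · obtain ⟨r, hr, hlr⟩ := (hl.prime.dvd_finsetProd_iff _).mp (Int.natCast_dvd_natCast.mp h3)
        have hr' := Finset.mem_filter.mp hr
        have : l = r :=
          (Nat.prime_dvd_prime_iff_eq hl (Nat.prime_of_mem_primeFactors hr'.1)).mp hlr
        exact hr'.2 (this ▸ hb)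
      · exact hlp.not_isUnit (h.isUnit_of_dvd' hb h3)
    · have hls : l ∈ s :=
        Finset.mem_filter.mpr ⟨Nat.mem_primeFactors.mpr ⟨hl, h2', hN.ne'⟩, hb⟩
      have h3 : (l : ℤ) ∣ (T : ℤ) :=
        Int.natCast_dvd_natCast.mpr (Finset.dvd_prod_of_mem _ hls)
      exact hb ((dvd_add_left (h3.mul_right p)).mp h1)

theorem disk_subset_disk {α β : ℚ} (h : |α - β| ≤ 1 / β.den - 1 / α.den) :
    disk α ⊆ disk β := by
  apply Metric.closedBall_subset_closedBall'
  have h' : |(α : ℝ) - β| ≤ 1 / β.den - 1 / α.den := by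
    have := (Rat.cast_le (K := ℝ)).mpr h
    push_cast at this
    exact this
  have : dist (α : ℂ) (β : ℂ) = |(α : ℝ) - β| := by
    rw [Complex.dist_eq, ← Complex.ofReal_ratCast, ← Complex.ofReal_ratCast,
      ← Complex.ofReal_sub, Complex.norm_real, Real.norm_eq_abs]
  linarith

theorem den_intCast_div_natCast {b : ℤ} {m : ℕ} (hm : 0 < m) (h : IsCoprime b (m : ℤ)) :
    ((b : ℚ) / m).den = m := by
  have := Rat.den_div_eq_of_coprime (a := b) (b := m) (by exact_mod_cast hm)
    (Int.isCoprime_iff_gcd_eq_one.mp h)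
  exact_mod_cast this

/-- A disk inside the disk of a candidate of smaller denominator is redundant. -/
theorem notMem_SSet_of_close {N : ℕ} (hN : 0 < N) {α : ℚ} (hα : α ∈ cand N) {m : ℕ}
    (hm : α.den = N * m) {b : ℤ} {k : ℕ} (hk : 0 < k) (hkm : k < m)
    (hb : IsCoprime b ((N * k : ℕ) : ℤ))
    (h : |(k : ℚ) * (N * α) - b| ≤ 1 - k / m) : α ∉ SSet N := by
  rintro ⟨-, hS⟩
  have hNk : 0 < N * k := Nat.mul_pos hN hk
  have hden := den_intCast_div_natCast hNk hb
  set β : ℚ := (b : ℚ) / (N * k : ℕ) with hβ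
  have hNq : (0 : ℚ) < N := by exact_mod_cast hN
  have hkq : (0 : ℚ) < k := by exact_mod_cast hk
  have hmq : (0 : ℚ) < m := by exact_mod_cast hk.trans hkm
  have hkm' : (0 : ℚ) < k / m := by positivity
  obtain ⟨h1, h2⟩ := abs_le.mp h
  have hb0 : 0 ≤ b := by
    have : (-1 : ℚ) < b := by
      have : 0 ≤ (k : ℚ) * (N * α) := by have := hα.1; positivity
      linarith
    have : (-1 : ℤ) < b := by exact_mod_cast this
    omega
  have hb1 : b ≤ (N * k : ℕ) := by
    have : (b : ℚ) < (N * k : ℕ) + 1 := by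
      have : (k : ℚ) * (N * α) ≤ k * (N * 1) := by have := hα.2.1; gcongr
      push_cast
      linarith
    have : b < (N * k : ℕ) + 1 := by exact_mod_cast this
    omega
  have hNkq : (0 : ℚ) < (N * k : ℕ) := by exact_mod_cast hNk
  have hβc : β ∈ cand N := by
    refine ⟨?_, ?_, ?_⟩
    · have : (0 : ℚ) ≤ b := by exact_mod_cast hb0
      positivity
    · rw [hβ, div_le_one hNkq]
      exact_mod_cast hb1
    · rw [hden]
      exact dvd_mul_right _ _
  have hne : β ≠ α := by
    intro he
    rw [he, hm] at hden
    exact hkm.ne' (Nat.eq_of_mul_eq_mul_left hN hden)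
  refine hS (subset_trans (disk_subset_disk (β := β) ?_)
    (Set.subset_biUnion_of_mem (u := disk) (show β ∈ cand N \ {α} from ⟨hβc, hne⟩)))
  rw [hden, hm]
  have e : α - β = (k * (N * α) - b) / (N * k : ℕ) := by
    rw [hβ]
    push_cast
    field_simp
  rw [e, abs_div, abs_of_pos hNkq, div_le_iff₀ hNkq]
  refine h.trans (le_of_eq ?_)
  push_cast
  field_simp

theorem den_lt_of_mem_SSet {N : ℕ} (hN : 1 < N) {α : ℚ} (hα : α ∈ SSet N) :
    α.den < N * (16 * (N + 1) ^ 2) := by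
  by_contra! hcon
  obtain ⟨hα0, hα1, m, hm⟩ := hα.1
  have hNpos : 0 < N := by omega
  have hmB : 16 * (N + 1) ^ 2 ≤ m := by
    rw [hm] at hcon
    exact Nat.le_of_mul_le_mul_left hcon hNpos
  have hmq : (16 * (N + 1) ^ 2 : ℚ) ≤ m := by exact_mod_cast hmB
  have hNq : (1 : ℚ) ≤ N := by exact_mod_cast hNpos
  have hmpos : (0 : ℚ) < m := by nlinarith
  obtain ⟨r, hr, hrn⟩ := Real.exists_rat_abs_sub_le_and_den_le ((N * α : ℚ) : ℝ)
    (n := 4 * (N + 1)) (by omega)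
  replace hr : |(N * α : ℚ) - r| ≤ 1 / (((4 * (N + 1) : ℕ) + 1) * r.den) := by
    rw [← Rat.cast_le (K := ℝ)]
    push_cast at hr ⊢
    exact hr
  have hNα : (N * α : ℚ) * m = α.num := by
    have := Rat.mul_den_eq_num α
    rw [hm] at this
    push_cast at this
    linarith
  rcases Nat.lt_or_ge 1 r.den with hq | hq
  · obtain ⟨u, v, huv⟩ := Rat.isCoprime_num_den r
    have hq0 : (0 : ℤ) < r.den := by omega
    set k₀ : ℤ := (-u) % r.den with hk₀
    have hk₀e := Int.emod_add_mul_ediv (-u) r.den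
    rw [← hk₀] at hk₀e
    set b₀ : ℤ := v - (-u) / r.den * r.num with hb₀
    have hid : b₀ * r.den - k₀ * r.num = 1 := by
      rw [hb₀]
      linear_combination huv - r.num * hk₀e
    have hk₀0 : 0 < k₀ := by
      refine lt_of_le_of_ne (Int.emod_nonneg _ hq0.ne') fun h0 => ?_
      rw [← h0] at hid
      have : (r.den : ℤ) ∣ 1 := ⟨b₀, by linarith⟩
      have := Int.le_of_dvd one_pos this
      omega
    have hk₀q : k₀ < r.den := Int.emod_lt_of_pos _ hq0
    obtain ⟨t, htN, ht⟩ := exists_isCoprime_add_mul N hNpos b₀ r.num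
      ⟨r.den, -k₀, by linarith⟩
    obtain ⟨k₁, hk₁⟩ := Int.eq_ofNat_of_zero_le hk₀0.le
    have hk₁0 : 0 < k₁ := by omega
    have hk₁q : k₁ < r.den := by omega
    have hid' : (b₀ + t * r.num) * r.den - ((k₁ + t * r.den : ℕ) : ℤ) * r.num = 1 := by
      push_cast
      rw [← hk₁]
      linear_combination hid
    have hkle : k₁ + t * r.den ≤ r.den * (N + 1) := by nlinarith
    have hkle' : k₁ + t * r.den ≤ 4 * (N + 1) ^ 2 := by nlinarith
    set k := k₁ + t * r.den
    set b := b₀ + t * r.num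
    refine notMem_SSet_of_close hNpos hα.1 hm (b := b) (k := k) (by omega) (by nlinarith) ?_ ?_ hα
    · push_cast
      exact ht.mul_right ⟨r.den, -r.num, by linarith⟩
    · have hqq : (2 : ℚ) ≤ r.den := by exact_mod_cast hq
      have hkq : (k : ℚ) ≤ r.den * (N + 1) := by exact_mod_cast hkle
      have hkq' : (k : ℚ) ≤ 4 * (N + 1) ^ 2 := by exact_mod_cast hkle'
      have hidq : (b : ℚ) * r.den - k * r.num = 1 := by exact_mod_cast hid'
      have e : (k : ℚ) * (N * α) - b = k * (N * α - r) - 1 / r.den := by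
        have h1 : (b : ℚ) = k * r + 1 / r.den := by
          have h2 : r * r.den = r.num := Rat.mul_den_eq_num r
          have h3 : (r.den : ℚ) ≠ 0 := by positivity
          rw [← sub_eq_iff_eq_add', eq_div_iff h3]
          linear_combination hidq - k * h2
        rw [h1]
        ring
      have h1 : |(k : ℚ) * (N * α - r)| ≤ 1 / 4 := by
        rw [abs_mul, abs_of_nonneg (by positivity : (0 : ℚ) ≤ k)]
        calc (k : ℚ) * |(N * α : ℚ) - r|
            ≤ (r.den * (N + 1)) * (1 / (((4 * (N + 1) : ℕ) + 1) * r.den)) := by gcongr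
          _ = (N + 1) / (4 * (N + 1) + 1) := by
            have h3 : (r.den : ℚ) ≠ 0 := by positivity
            push_cast
            rw [mul_one_div, mul_comm (r.den : ℚ), mul_div_mul_right _ _ h3]
          _ ≤ 1 / 4 := by
            rw [div_le_div_iff₀ (by positivity) (by positivity)]
            linarith
      have h2 : (1 : ℚ) / r.den ≤ 1 / 2 := by gcongr
      have h3 : (k : ℚ) / m ≤ 1 / 4 := by
        rw [div_le_div_iff₀ hmpos (by positivity)]
        linarith
      have h4 : (0 : ℚ) ≤ 1 / r.den := by positivity
      rw [e, abs_le]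
      obtain ⟨h5, h6⟩ := abs_le.mp h1
      constructor <;> linarith
  · have hr1 : r.den = 1 := le_antisymm hq r.den_pos
    have hrz : (r.num : ℚ) = r := Rat.coe_int_num_of_den_eq_one hr1
    have hx : |(N * α : ℚ) - r.num| ≤ 1 / (4 * (N + 1) + 1) := by
      rw [hrz]
      refine hr.trans (le_of_eq ?_)
      rw [hr1]
      push_cast
      rw [mul_one]
    generalize r.num = p at hx
    have hx' : (N : ℚ) * |(N * α : ℚ) - p| ≤ 1 / 4 := by
      calc (N : ℚ) * |(N * α : ℚ) - p| ≤ N * (1 / (4 * (N + 1) + 1)) := by gcongr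
        _ ≤ 1 / 4 := by
          rw [mul_one_div, div_le_div_iff₀ (by positivity) (by positivity)]
          linarith
    have hNm : (N : ℚ) / m ≤ 1 / 4 := by
      rw [div_le_div_iff₀ hmpos (by positivity)]
      nlinarith
    have hlt : N < m := by nlinarith
    have hne : α.num - p * m ≠ 0 := by
      intro h0
      have h1 : (m : ℤ) ∣ α.num := ⟨p, by linarith⟩
      have h2 : (m : ℤ) ∣ α.den := ⟨N, by rw [hm]; push_cast; ring⟩
      have := (Rat.isCoprime_num_den α).isUnit_of_dvd' h1 h2
      rw [Int.isUnit_iff] at this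
      omega
    have hcop (s : ℤ) (hs : s * s = 1) : IsCoprime (p * N + s) ((N * N : ℕ) : ℤ) := by
      have : IsCoprime (p * N + s) (N : ℤ) := ⟨s, -s * p, by linear_combination hs⟩
      push_cast
      exact this.mul_right this
    obtain ⟨h5, h6⟩ := abs_le.mp
      (show |(N : ℚ) * ((N * α : ℚ) - p)| ≤ 1 / 4 by
        rwa [abs_mul, abs_of_nonneg (by positivity : (0 : ℚ) ≤ N)])
    have hdiff : (N : ℚ) * ((N * α : ℚ) - p) = ((α.num - p * m : ℤ) : ℚ) * (N / m) := by
      push_cast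
      rw [← hNα]
      field_simp
    have hNm0 : (0 : ℚ) < N / m := by positivity
    rcases lt_or_gt_of_ne hne with h0 | h0
    · refine notMem_SSet_of_close hNpos hα.1 hm (b := p * N + -1) (k := N) hNpos hlt
        (hcop _ (by norm_num)) ?_ hα
      have h7 : ((α.num - p * m : ℤ) : ℚ) ≤ -1 := by
        have : α.num - p * m ≤ -1 := by omega
        exact_mod_cast this
      have h8 : (N : ℚ) * ((N * α : ℚ) - p) ≤ -(N / m) := by
        rw [hdiff]
        nlinarith
      push_cast
      rw [abs_le]
      constructor <;> linarith
    · refine notMem_SSet_of_close hNpos hα.1 hm (b := p * N + 1) (k := N) hNpos hlt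
        (hcop _ (by norm_num)) ?_ hα
      have h7 : (1 : ℚ) ≤ ((α.num - p * m : ℤ) : ℚ) := by
        have : 1 ≤ α.num - p * m := by omega
        exact_mod_cast this
      have h8 : (N / m : ℚ) ≤ (N : ℚ) * ((N * α : ℚ) - p) := by
        rw [hdiff]
        nlinarith
      push_cast
      rw [abs_le]
      constructor <;> linarith

theorem finite_SSet {N : ℕ} (hN : 1 < N) : (SSet N).Finite := by
  set B := N * (16 * (N + 1) ^ 2)
  refine (((Set.finite_Icc (0 : ℤ) B).prod (Set.finite_Icc 0 B)).image
    fun x : ℤ × ℕ => (x.1 : ℚ) / x.2).subset fun α hα => ?_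
  have hlt := den_lt_of_mem_SSet hN hα
  refine ⟨(α.num, α.den), ⟨⟨Rat.num_nonneg.mpr hα.1.1, ?_⟩, Nat.zero_le _, hlt.le⟩,
    Rat.num_div_den α⟩
  have h1 : α.num ≤ α.den := by
    have h2 := Rat.mul_den_eq_num α
    have h3 : (α.num : ℚ) ≤ α.den := by
      have := hα.1.2.1
      have : (0 : ℚ) < α.den := by exact_mod_cast α.den_pos
      nlinarith
    exact_mod_cast h3
  have h4 : (α.den : ℤ) < B := by exact_mod_cast hlt
  exact h1.trans h4.le

theorem abs_re_sub_le_of_mem_disk {α : ℚ} {z : ℂ} (hz : z ∈ disk α) :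
    |z.re - α| ≤ 1 / α.den := by
  have h := Complex.abs_re_le_norm (z - (α : ℂ))
  rw [Complex.sub_re, Complex.ratCast_re] at h
  exact h.trans (mem_closedBall_iff_norm.mp hz)

theorem div_add_le_of_lt {N p : ℕ} {α : ℚ} (hN : 0 < N) (hα : N ∣ α.den) (h : (p : ℚ) / N < α) :
    (p : ℚ) / N + 1 / α.den ≤ α := by
  obtain ⟨m, hm⟩ := hα
  have hd : (0 : ℚ) < α.den := by exact_mod_cast α.den_pos
  have hNq : (0 : ℚ) < N := by exact_mod_cast hN
  have hα' : α * α.den = α.num := Rat.mul_den_eq_num α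
  have e : (p : ℚ) / N * α.den = (p * m : ℤ) := by
    rw [hm]
    push_cast
    field_simp
  have h1 : ((p * m : ℤ) : ℚ) < α.num := by
    rw [← e, ← hα']
    gcongr
  have h2 : ((p * m + 1 : ℤ) : ℚ) ≤ α.num := by
    have h3 : (p * m : ℤ) < α.num := by exact_mod_cast h1
    exact_mod_cast (show (p * m + 1 : ℤ) ≤ α.num from h3)
  refine le_of_mul_le_mul_right ?_ hd
  rw [add_mul, e, hα', one_div_mul_cancel hd.ne']
  push_cast at h2 ⊢
  exact h2

theorem le_div_sub_of_lt {N p : ℕ} {α : ℚ} (hN : 0 < N) (hα : N ∣ α.den) (h : α < (p : ℚ) / N) :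
    α ≤ (p : ℚ) / N - 1 / α.den := by
  obtain ⟨m, hm⟩ := hα
  have hd : (0 : ℚ) < α.den := by exact_mod_cast α.den_pos
  have hNq : (0 : ℚ) < N := by exact_mod_cast hN
  have hα' : α * α.den = α.num := Rat.mul_den_eq_num α
  have e : (p : ℚ) / N * α.den = (p * m : ℤ) := by
    rw [hm]
    push_cast
    field_simp
  have h1 : (α.num : ℚ) < (p * m : ℤ) := by
    rw [← e, ← hα']
    gcongr
  have h2 : (α.num : ℚ) ≤ (p * m - 1 : ℤ) := by
    have h3 : α.num < (p * m : ℤ) := by exact_mod_cast h1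
    exact_mod_cast (show α.num ≤ (p * m - 1 : ℤ) by omega)
  refine le_of_mul_le_mul_right ?_ hd
  rw [sub_mul, e, hα', one_div_mul_cancel hd.ne']
  push_cast at h2 ⊢
  exact h2

theorem ne_div_of_one_lt_gcd {N p : ℕ} {α : ℚ} (hα : N ∣ α.den)
    (hp : 1 < Nat.gcd N p) : α ≠ (p : ℚ) / N := by
  intro h
  have hN : N ≠ 0 := by
    rintro rfl
    exact α.den_nz (zero_dvd_iff.mp hα)
  have hNq : (N : ℚ) ≠ 0 := by exact_mod_cast hN
  have h1 : α * α.den = α.num := Rat.mul_den_eq_num α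
  obtain ⟨m, hm⟩ := hα
  have h2 : (α.num : ℚ) = (p * m : ℤ) := by
    rw [← h1, hm, h]
    push_cast
    field_simp
  have h3 : α.num = p * m := by exact_mod_cast h2
  have hc := Rat.isCoprime_num_den α
  have h4 : ((Nat.gcd N p : ℕ) : ℤ) ∣ α.num :=
    h3 ▸ (Int.natCast_dvd_natCast.mpr (Nat.gcd_dvd_right N p)).mul_right _
  have h5 : ((Nat.gcd N p : ℕ) : ℤ) ∣ α.den :=
    Int.natCast_dvd_natCast.mpr (hm ▸ (Nat.gcd_dvd_left N p).mul_right _)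
  have := hc.isUnit_of_dvd' h4 h5
  rw [Int.isUnit_iff] at this
  omega

/-- Disks on opposite sides of a point `p / N` meet at most in that point. -/
theorem eq_of_mem_disk_of_mem_disk {N p : ℕ} {α β : ℚ} (hN : 0 < N) (hα : N ∣ α.den)
    (hβ : N ∣ β.den) (hαp : α < (p : ℚ) / N) (hβp : (p : ℚ) / N < β) {z : ℂ}
    (hzα : z ∈ disk α) (hzβ : z ∈ disk β) : z = (((p : ℚ) / N : ℚ) : ℂ) := by
  have h1 := (Rat.cast_le (K := ℝ)).mpr (le_div_sub_of_lt hN hα hαp)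
  have h2 := (Rat.cast_le (K := ℝ)).mpr (div_add_le_of_lt hN hβ hβp)
  have h3 := (abs_le.mp (abs_re_sub_le_of_mem_disk hzα)).2
  have h4 := (abs_le.mp (abs_re_sub_le_of_mem_disk hzβ)).1
  generalize (p : ℚ) / N = c at *
  push_cast at h1 h2
  have hre : z.re = c := by linarith
  have h5 : ‖z - (β : ℂ)‖ ≤ 1 / (β.den : ℝ) := mem_closedBall_iff_norm.mp hzβ
  have h6 : ‖z - (β : ℂ)‖ ^ 2 ≤ (1 / (β.den : ℝ)) ^ 2 := by gcongr
  rw [Complex.sq_norm, Complex.normSq_apply] at h6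
  simp only [Complex.sub_re, Complex.sub_im, Complex.ratCast_re, Complex.ratCast_im] at h6
  have h7 : (0 : ℝ) < 1 / β.den := by
    have : (0 : ℝ) < β.den := by exact_mod_cast β.den_pos
    positivity
  have him : z.im = 0 := by
    have : z.im * z.im ≤ 0 := by nlinarith
    nlinarith
  apply Complex.ext
  · simpa using hre
  · simpa using him

/-- A pole lies strictly inside its strip, hence in no disk of another strip. -/
theorem northPole_notMem_disk {N p : ℕ} {α β : ℚ} (hN : 0 < N)
    (hβ : N ∣ β.den) (h : α < (p : ℚ) / N ∧ (p : ℚ) / N < β ∨ β < (p : ℚ) / N ∧ (p : ℚ) / N < α) :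
    northPole α ∉ disk β := by
  intro hz
  have hre : (northPole α).re = α := by
    simp [northPole, Complex.div_natCast_re]
  have hz' := abs_re_sub_le_of_mem_disk hz
  rw [hre] at hz'
  have hz'' : |α - β| ≤ 1 / β.den := by
    rw [← Rat.cast_le (K := ℝ)]
    push_cast
    exact hz'
  obtain ⟨h1, h2⟩ := abs_le.mp hz''
  rcases h with ⟨h3, h4⟩ | ⟨h3, h4⟩
  · have := div_add_le_of_lt hN hβ h4
    linarith
  · have := le_div_sub_of_lt hN hβ h3
    linarith

/-- The rational `p / N + s / (N * k)` with `s = ±1`, of denominator exactly `N * k`. -/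
theorem den_add_unit_div {N k : ℕ} (hN : 0 < N) (hk : 0 < k) (hNk : N ∣ k) (p : ℕ) {s : ℤ}
    (hs : s * s = 1) : ((p : ℚ) / N + s / (N * k : ℕ)).den = N * k := by
  have hkq : (k : ℚ) ≠ 0 := by exact_mod_cast hk.ne'
  have hNq : (N : ℚ) ≠ 0 := by exact_mod_cast hN.ne'
  have e : (p : ℚ) / N + s / (N * k : ℕ) = ((p * k + s : ℤ) : ℚ) / (N * k : ℕ) := by
    push_cast
    field_simp
  rw [e]
  refine den_intCast_div_natCast (Nat.mul_pos hN hk) ?_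
  have h1 : IsCoprime (p * k + s : ℤ) (k : ℤ) := ⟨s, -s * p, by linear_combination hs⟩
  push_cast
  exact (h1.of_isCoprime_of_dvd_right (Int.natCast_dvd_natCast.mpr hNk)).mul_right h1

theorem nxt_spec {N n : ℕ} (hN : 1 < N) (hn : n ≤ N - 1) :
    n < nxt N n ∧ 1 < Nat.gcd N (nxt N n) ∧ nxt N n ≤ N := by
  have hmem : N ∈ {m | n < m ∧ 1 < Nat.gcd N m} := ⟨by omega, by simpa using hN⟩
  have h := Nat.sInf_mem ⟨N, hmem⟩
  exact ⟨h.1, h.2, Nat.sInf_le hmem⟩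

theorem candP_subset_cand {N n : ℕ} (hN : 1 < N) (hn : n ≤ N - 1) : candP N n ⊆ cand N := by
  rintro α ⟨h1, h2, h3⟩
  have hNq : (0 : ℚ) < N := by exact_mod_cast (by omega : 0 < N)
  refine ⟨le_trans (by positivity) h1, h2.trans ?_, h3⟩
  rw [div_le_one hNq]
  exact_mod_cast (nxt_spec hN hn).2.2

theorem exists_mem_candP {N : ℕ} (hN : 1 < N) {α : ℚ} (hα : α ∈ cand N) :
    ∃ n, n ≤ N - 1 ∧ 1 < Nat.gcd N n ∧ α ∈ candP N n := by
  classical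
  obtain ⟨h0, h1, h2⟩ := hα
  have hNq : (0 : ℚ) < N := by exact_mod_cast (by omega : 0 < N)
  set P : ℕ → Prop := fun n => 1 < Nat.gcd N n ∧ (n : ℚ) / N ≤ α
  have hP0 : P 0 := ⟨by simpa using hN, by simpa using h0⟩
  obtain ⟨h3, h4⟩ : P (Nat.findGreatest P N) := Nat.findGreatest_spec (Nat.zero_le N) hP0
  have h5 := Nat.findGreatest_le (P := P) N
  have hmax : ∀ m, Nat.findGreatest P N < m → m ≤ N → ¬ P m :=
    fun m hm hm' => Nat.findGreatest_is_greatest hm hm'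
  generalize Nat.findGreatest P N = n at *
  have hnN : n ≠ N := by
    rintro rfl
    rw [div_self hNq.ne'] at h4
    refine ne_div_of_one_lt_gcd h2 h3 ?_
    rw [div_self hNq.ne']
    exact le_antisymm h1 h4
  have hn : n ≤ N - 1 := by omega
  obtain ⟨h6, h7, h8⟩ := nxt_spec hN hn
  refine ⟨n, hn, h3, h4, ?_, h2⟩
  by_contra! h9
  exact hmax _ h6 h8 ⟨h7, h9.le⟩

theorem SP_eq {N n : ℕ} (hN : 1 < N) (hn : n ≤ N - 1) (hg : 1 < Nat.gcd N n) :
    SP N n = SSet N ∩ candP N n := by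
  have hN0 : 0 < N := by omega
  have hNq : (0 : ℚ) < N := by exact_mod_cast hN0
  obtain ⟨hx1, hx2, hx3⟩ := nxt_spec hN hn
  have hsub := candP_subset_cand hN hn
  ext α
  constructor
  · rintro ⟨hα, hS⟩
    refine ⟨⟨hsub hα, fun hcov => hS fun z hz => ?_⟩, hα⟩
    obtain ⟨β, ⟨hβ, hβα⟩, hzβ⟩ := Set.mem_iUnion₂.mp (hcov hz)
    set k := N * α.den with hk
    have hk0 : 0 < k := Nat.mul_pos hN0 α.den_pos
    have hNk : N ∣ k := dvd_mul_right _ _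
    have hkN : 1 ≤ (k : ℚ) := by exact_mod_cast hk0
    have hden : α.den < N * k := by
      have := α.den_pos
      nlinarith
    have hlt1 : (n : ℚ) / N < α := lt_of_le_of_ne hα.1 (ne_div_of_one_lt_gcd hα.2.2 hg).symm
    have hlt2 : α < (nxt N n : ℚ) / N :=
      lt_of_le_of_ne hα.2.1 (ne_div_of_one_lt_gcd hα.2.2 hx2)
    have hgap : (n : ℚ) / N + 1 / (N * k : ℕ) ≤ (nxt N n : ℚ) / N := by
      have h1 : (n : ℚ) + 1 ≤ nxt N n := by exact_mod_cast hx1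
      have h2 : 1 / ((N * k : ℕ) : ℚ) ≤ 1 / N := by
        push_cast
        gcongr
        nlinarith
      have h3 : (n : ℚ) / N + 1 / N ≤ (nxt N n : ℚ) / N := by
        rw [← add_div]
        gcongr
      linarith
    have hpos : (0 : ℚ) < 1 / (N * k : ℕ) := by
      have : (0 : ℚ) < (N * k : ℕ) := by exact_mod_cast Nat.mul_pos hN0 hk0
      positivity
    have key {p : ℕ} {s : ℤ} (hs : s * s = 1)
        (h1 : (n : ℚ) / N ≤ (p : ℚ) / N + s / (N * k : ℕ))
        (h2 : (p : ℚ) / N + s / (N * k : ℕ) ≤ (nxt N n : ℚ) / N)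
        (hzp : z = (((p : ℚ) / N : ℚ) : ℂ)) : z ∈ ⋃ β ∈ candP N n \ {α}, disk β := by
      have hd := den_add_unit_div hN0 hk0 hNk p hs
      have hs' : |(s : ℚ)| = 1 := by
        have : (s : ℚ) * s = 1 := by exact_mod_cast hs
        rcases mul_self_eq_one_iff.mp this with h | h <;> simp [h]
      generalize hγ : (p : ℚ) / N + s / (N * k : ℕ) = γ at *
      refine Set.mem_biUnion (x := γ) ⟨⟨h1, h2, ?_⟩, ?_⟩ ?_
      · rw [hd]
        exact dvd_mul_right _ _
      · intro h
        rw [Set.mem_singleton_iff] at h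
        rw [h] at hd
        omega
      · have h3 : |(p : ℚ) / N - γ| = 1 / γ.den := by
          rw [← hγ, sub_add_cancel_left, abs_neg, abs_div, hs', Nat.abs_cast, hγ, hd]
        rw [hzp, disk, mem_closedBall_iff_norm, ← Rat.cast_sub, ← Complex.ofReal_ratCast,
          Complex.norm_real, Real.norm_eq_abs, ← Rat.cast_abs, h3]
        push_cast
        exact le_rfl
    by_cases hβn : (n : ℚ) / N ≤ β
    · by_cases hβx : β ≤ (nxt N n : ℚ) / N
      · exact Set.mem_biUnion (x := β) ⟨⟨hβn, hβx, hβ.2.2⟩, hβα⟩ hzβ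
      · refine key (p := nxt N n) (s := -1) (by norm_num) ?_ ?_
          (eq_of_mem_disk_of_mem_disk hN0 hα.2.2 hβ.2.2 hlt2 (not_le.mp hβx) hz hzβ)
        · push_cast at hgap ⊢
          rw [neg_div]
          linarith
        · push_cast at hpos ⊢
          rw [neg_div]
          linarith
    · refine key (p := n) (s := 1) (by norm_num) ?_ ?_
        (eq_of_mem_disk_of_mem_disk hN0 hβ.2.2 hα.2.2 (not_le.mp hβn) hlt1 hzβ hz)
      · push_cast at hpos ⊢
        linarith
      · push_cast at hgap ⊢
        exact hgap
  · rintro ⟨⟨-, hS⟩, hα⟩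
    exact ⟨hα, fun hcov => hS (hcov.trans
      (Set.biUnion_subset_biUnion_left (Set.sdiff_subset_sdiff_left hsub)))⟩

theorem poleComplexity_SP {N n : ℕ} (hN : 1 < N) (hn : n ≤ N - 1) (hg : 1 < Nat.gcd N n)
    {α : ℚ} (hα : α ∈ candP N n) :
    poleComplexity (SP N n) α = poleComplexity (SSet N) α := by
  have hN0 : 0 < N := by omega
  obtain ⟨hx1, hx2, hx3⟩ := nxt_spec hN hn
  unfold poleComplexity
  congr 1
  ext β
  rw [SP_eq hN hn hg]
  refine ⟨fun ⟨h1, h2⟩ => ⟨h1.1, h2⟩, fun ⟨h1, h2, h3⟩ => ⟨⟨h1, ?_, ?_, h1.1.2.2⟩, h2, h3⟩⟩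
  · by_contra! h
    refine northPole_notMem_disk hN0 h1.1.2.2 (p := n) (Or.inr ⟨h, ?_⟩) h3
    exact lt_of_le_of_ne hα.1 (ne_div_of_one_lt_gcd hα.2.2 hg).symm
  · by_contra! h
    refine northPole_notMem_disk hN0 h1.1.2.2 (p := nxt N n) (Or.inl ⟨?_, h⟩) h3
    exact lt_of_le_of_ne hα.2.1 (ne_div_of_one_lt_gcd hα.2.2 hx2)

theorem cP_le_cN {N n : ℕ} (hN : 1 < N) (hn : n ≤ N - 1) (hg : 1 < Nat.gcd N n) :
    cP N n ≤ cN N := by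
  refine csSup_le' ?_
  rintro _ ⟨α, hα, rfl⟩
  rw [poleComplexity_SP hN hn hg hα.1]
  rw [SP_eq hN hn hg] at hα
  exact le_csSup ((finite_SSet hN).image _).bddAbove ⟨α, hα.1, rfl⟩

theorem cN_le_of_forall_cP_le {N B : ℕ} (hN : 1 < N)
    (h : ∀ n, n ≤ N - 1 → 1 < Nat.gcd N n → cP N n ≤ B) : cN N ≤ B := by
  refine csSup_le' ?_
  rintro _ ⟨α, hα, rfl⟩
  obtain ⟨n, hn, hg, hαn⟩ := exists_mem_candP hN hα.1
  rw [← poleComplexity_SP hN hn hg hαn]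
  have hSP := SP_eq hN hn hg
  have hfin : (SP N n).Finite := hSP ▸ (finite_SSet hN).inter_of_left _
  exact (le_csSup (hfin.image _).bddAbove ⟨α, hSP ▸ ⟨hα, hαn⟩, rfl⟩).trans (h n hn hg)

/-- `c(N)` is the maximum of `c(N,n)` over all pairs `(N,n)`; in particular
`c(N) = 0` iff `c(N,n) = 0` for all pairs `(N,n)`. -/
theorem cN_eq_max_cP (N : ℕ) (hN : 1 < N) :
    cN N = sSup (cP N '' {n | n ≤ N - 1 ∧ 1 < Nat.gcd N n}) ∧
    (cN N = 0 ↔ ∀ n, n ≤ N - 1 → 1 < Nat.gcd N n → cP N n = 0) := by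
  refine ⟨le_antisymm (cN_le_of_forall_cP_le hN fun n hn hg => ?_) (csSup_le' ?_), ?_, ?_⟩
  · refine le_csSup ⟨cN N, ?_⟩ ⟨n, ⟨hn, hg⟩, rfl⟩
    rintro _ ⟨m, hm, rfl⟩
    exact cP_le_cN hN hm.1 hm.2
  · rintro _ ⟨m, hm, rfl⟩
    exact cP_le_cN hN hm.1 hm.2
  · intro h n hn hg
    exact Nat.le_zero.mp (h ▸ cP_le_cN hN hn hg)
  · intro h
    exact Nat.le_zero.mp (cN_le_of_forall_cP_le hN fun n hn hg => (h n hn hg).le)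

end

end Paper
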